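/- Let P be a PPIP and S, T ∈ Csub(P) such that S ∪ T is consistent. Then the join S ∨ T exists in Csub(P) (ordered by inclusion) and is given by S ∨ T = S ∪ T ∪ {r ∈ P : there exist p ∈ S and q ∈ T such that C(p,q,r) holds}. -/

import Mathlib

/-- A PPIP: a poset (given by `le`) with a symmetric inconsistency relation `ic` and a
symmetric collinearity relation `C` satisfying (IC1), (IC2), (CT1), (CT2), Regularity,
weak Triangle, (CC1) and (CC2). -/
structure IsPPIP (P : Type*) (le : P → P → Prop) (ic : P → P → Prop)
    (C : P → P → P → Prop) : Prop where
  le_refl : ∀ p, le p p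
  le_trans : ∀ p q r, le p q → le q r → le p r
  le_antisymm : ∀ p q, le p q → le q p → p = q
  ic_symm : ∀ p q, ic p q → ic q p
  c_symm_left : ∀ p q r, C p q r → C q p r
  c_symm_right : ∀ p q r, C p q r → C p r q
  ic1 : ∀ p q, ic p q → ¬ ∃ w, le p w ∧ le q w
  ic2 : ∀ p q p' q', ic p q → le p p' → le q q' → ic p' q'
  ct1 : ∀ p q r, C p q r →
    (¬ le p q ∧ ¬ le q p) ∧ (¬ le q r ∧ ¬ le r q) ∧ (¬ le r p ∧ ¬ le p r)
  ct2 : ∀ p q r w, C p q r → le p w → le q w → le r w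
  regularity : ∀ p q r r', C p q r → le r' r → ¬ le r' p → ¬ le r' q →
    ∃ p' q', le p' p ∧ le q' q ∧ C p' q' r'
  weak_triangle : ∀ a b c p q, C a c p → C b c q →
    (∀ u v, u ∈ ({a, b, c, p, q} : Set P) → v ∈ ({a, b, c, p, q} : Set P) → ¬ ic u v) →
    ((∃ x, C a b x ∧ C p q x ∧
        List.Pairwise (fun u v => ¬ le u v ∧ ¬ le v u) [a, b, c, p, q, x] ∧
        (∀ u v w, u ∈ ({a, b, c, p, q, x} : Set P) → v ∈ ({a, b, c, p, q, x} : Set P) →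
          w ∈ ({a, b, c, p, q, x} : Set P) → C u v w →
          ({u, v, w} : Multiset P) = {a, c, p} ∨ ({u, v, w} : Multiset P) = {b, c, q} ∨
          ({u, v, w} : Multiset P) = {a, b, x} ∨ ({u, v, w} : Multiset P) = {p, q, x})) ∨
      (∃ a', le a' a ∧ C b q a') ∨
      C b q p ∨
      (∃ a' p', le a' a ∧ le p' p ∧ C q a' p') ∨
      (le q a ∨ le q p))
  cc1 : ∀ p q r, C p q r → ¬ ic p q ∧ ¬ ic q r ∧ ¬ ic r p
  cc2 : ∀ p q r x, C p q r →
    ((ic x p ∧ ic x q) ∨ (ic x q ∧ ic x r) ∨ (ic x p ∧ ic x r)) ∨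
    (¬ ic x p ∧ ¬ ic x q ∧ ¬ ic x r)
/-- A consistent subspace: a downward-closed subset, no two of whose elements are
inconsistent, that is closed under the collinearity relation. -/
def IsCSub {P : Type*} (le : P → P → Prop) (ic : P → P → Prop)
    (C : P → P → P → Prop) (X : Set P) : Prop :=
  (∀ p q, le p q → q ∈ X → p ∈ X) ∧
  (∀ p q, p ∈ X → q ∈ X → ¬ ic p q) ∧
  (∀ p q r, p ∈ X → q ∈ X → C p q r → r ∈ X)

/-- The union of `S`, `T` and the third points of the lines joining `S` to `T`. -/
def lineJoin {P : Type*} (C : P → P → P → Prop) (S T : Set P) : Set P :=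
  S ∪ T ∪ {r | ∃ p ∈ S, ∃ q ∈ T, C p q r}

namespace IsPPIP

variable {P : Type*} {le ic : P → P → Prop} {C : P → P → P → Prop} {S T U : Set P}

theorem lineJoin_comm (h : IsPPIP P le ic C) (S T : Set P) : lineJoin C S T = lineJoin C T S := by
  have key (S T : Set P) : lineJoin C S T ⊆ lineJoin C T S := by
    rintro r ((hr | hr) | ⟨p, hp, q, hq, hC⟩)
    · exact .inl (.inr hr)
    · exact .inl (.inl hr)
    · exact .inr ⟨q, hq, p, hp, h.c_symm_left _ _ _ hC⟩
  exact (key S T).antisymm (key T S)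

theorem exists_ic_of_ic_collinear (h : IsPPIP P le ic C) {p q r x : P} (hC : C p q r)
    (hx : ic x r) : ic x p ∨ ic x q := by
  rcases h.cc2 p q r x hC with (hx | hx | hx) | hx <;> tauto

theorem not_ic_self (h : IsPPIP P le ic C) (p : P) : ¬ ic p p :=
  fun hp => h.ic1 p p hp ⟨p, h.le_refl p, h.le_refl p⟩

theorem lineJoin_lower (h : IsPPIP P le ic C) (hS : IsCSub le ic C S) (hT : IsCSub le ic C T)
    {p q : P} (hpq : le p q) (hq : q ∈ lineJoin C S T) : p ∈ lineJoin C S T := by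
  rcases hq with (hq | hq) | ⟨s, hs, t, ht, hC⟩
  · exact .inl (.inl (hS.1 p q hpq hq))
  · exact .inl (.inr (hT.1 p q hpq hq))
  · by_cases hps : le p s
    · exact .inl (.inl (hS.1 p s hps hs))
    by_cases hpt : le p t
    · exact .inl (.inr (hT.1 p t hpt ht))
    obtain ⟨s', t', hs', ht', hC'⟩ := h.regularity s t q p hC hpq hps hpt
    exact .inr ⟨s', hS.1 _ _ hs' hs, t', hT.1 _ _ ht' ht, hC'⟩

theorem lineJoin_consistent (h : IsPPIP P le ic C)
    (hcons : ∀ p q, p ∈ S ∪ T → q ∈ S ∪ T → ¬ ic p q) {p q : P}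
    (hp : p ∈ lineJoin C S T) (hq : q ∈ lineJoin C S T) : ¬ ic p q := by
  have exists_ic {x r : P} (hr : r ∈ lineJoin C S T) (hx : ic x r) : ∃ y ∈ S ∪ T, ic x y := by
    rcases hr with hr | ⟨s, hs, t, ht, hC⟩
    · exact ⟨r, hr, hx⟩
    · rcases h.exists_ic_of_ic_collinear hC hx with hx | hx
      · exact ⟨s, .inl hs, hx⟩
      · exact ⟨t, .inr ht, hx⟩
  intro hpq
  obtain ⟨y, hy, hpy⟩ := exists_ic hq hpq
  obtain ⟨z, hz, hyz⟩ := exists_ic hp (h.ic_symm _ _ hpy)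
  exact hcons y z hy hz hyz

/-- The alternatives of the weak triangle axiom without its nondegeneracy clauses, for
triples `C a p c` and `C b c q` whose points other than `q` lie in a consistent set. -/
theorem weak_triangle_of_consistent (h : IsPPIP P le ic C)
    (hU : ∀ p q, p ∈ U → q ∈ U → ¬ ic p q) {a b c p q : P}
    (ha : a ∈ U) (hb : b ∈ U) (hc : c ∈ U) (hp : p ∈ U) (hacp : C a p c) (hbcq : C b c q) :
    (∃ x, C a b x ∧ C p x q) ∨ (∃ a', le a' a ∧ C a' b q) ∨ C p b q ∨
      (∃ a' p', le a' a ∧ le p' p ∧ C a' p' q) ∨ le q a ∨ le q p := by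
  have hq {x : P} (hx : x ∈ U) : ¬ ic x q := fun hxq =>
    (h.exists_ic_of_ic_collinear hbcq hxq).elim (hU x b hx hb) (hU x c hx hc)
  have hcons : ∀ u v, u ∈ ({a, b, c, p, q} : Set P) → v ∈ ({a, b, c, p, q} : Set P) →
      ¬ ic u v := by
    have hmem {u : P} (hu : u ∈ ({a, b, c, p, q} : Set P)) : u ∈ U ∨ u = q := by
      rcases hu with rfl | rfl | rfl | rfl | hu
      exacts [.inl ha, .inl hb, .inl hc, .inl hp, .inr hu]
    intro u v hu hv
    rcases hmem hu with huU | rfl <;> rcases hmem hv with hvU | rfl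
    · exact hU u v huU hvU
    · exact hq huU
    · exact fun huv => hq hvU (h.ic_symm _ _ huv)
    · exact h.not_ic_self _
  have rotate {x y z : P} (hC : C x y z) : C z x y :=
    h.c_symm_left _ _ _ (h.c_symm_right _ _ _ hC)
  rcases h.weak_triangle a b c p q (h.c_symm_right _ _ _ hacp) hbcq hcons with
    ⟨x, hx, hx', -⟩ | ⟨a', ha', hC⟩ | hC | ⟨a', p', ha', hp', hC⟩ | hle
  · exact .inl ⟨x, hx, h.c_symm_right _ _ _ hx'⟩
  · exact .inr (.inl ⟨a', ha', rotate hC⟩)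
  · exact .inr (.inr (.inl (rotate hC)))
  · exact .inr (.inr (.inr (.inl ⟨a', p', ha', hp', rotate (rotate hC)⟩)))
  · exact .inr (.inr (.inr (.inr hle)))

theorem mem_lineJoin_of_collinear_left (h : IsPPIP P le ic C) (hS : IsCSub le ic C S)
    (hT : IsCSub le ic C T) (hcons : ∀ p q, p ∈ S ∪ T → q ∈ S ∪ T → ¬ ic p q) {x v r : P}
    (hx : x ∈ S) (hv : v ∈ lineJoin C S T) (hC : C x v r) : r ∈ lineJoin C S T := by
  have hv' := hv
  rcases hv with (hv | hv) | ⟨s, hs, t, ht, hst⟩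
  · exact .inl (.inl (hS.2.2 x v r hx hv hC))
  · exact .inr ⟨x, hx, v, hv, hC⟩
  · rcases h.weak_triangle_of_consistent (fun _ _ => h.lineJoin_consistent hcons)
      (.inl (.inl hs)) (.inl (.inl hx)) hv' (.inl (.inr ht)) hst hC with
      ⟨y, hy, hyr⟩ | ⟨s', hs', hr⟩ | hr | ⟨s', t', hs', ht', hr⟩ | hr | hr
    · exact .inr ⟨y, hS.2.2 s x y hs hx hy, t, ht, h.c_symm_left _ _ _ hyr⟩
    · exact .inl (.inl (hS.2.2 _ _ _ (hS.1 _ _ hs' hs) hx hr))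
    · exact .inr ⟨x, hx, t, ht, h.c_symm_left _ _ _ hr⟩
    · exact .inr ⟨s', hS.1 _ _ hs' hs, t', hT.1 _ _ ht' ht, hr⟩
    · exact .inl (.inl (hS.1 _ _ hr hs))
    · exact .inl (.inr (hT.1 _ _ hr ht))

theorem mem_lineJoin_of_collinear_right (h : IsPPIP P le ic C) (hS : IsCSub le ic C S)
    (hT : IsCSub le ic C T) (hcons : ∀ p q, p ∈ S ∪ T → q ∈ S ∪ T → ¬ ic p q) {x v r : P}
    (hx : x ∈ T) (hv : v ∈ lineJoin C S T) (hC : C x v r) : r ∈ lineJoin C S T := by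
  rw [h.lineJoin_comm] at hv ⊢
  rw [Set.union_comm] at hcons
  exact h.mem_lineJoin_of_collinear_left hT hS hcons hx hv hC

theorem mem_lineJoin_of_collinear (h : IsPPIP P le ic C) (hS : IsCSub le ic C S)
    (hT : IsCSub le ic C T) (hcons : ∀ p q, p ∈ S ∪ T → q ∈ S ∪ T → ¬ ic p q) {u v r : P}
    (hu : u ∈ lineJoin C S T) (hv : v ∈ lineJoin C S T) (hC : C u v r) :
    r ∈ lineJoin C S T := by
  have hu' := hu
  have left {x v r : P} := @mem_lineJoin_of_collinear_left P le ic C S T h hS hT hcons x v r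
  have right {x v r : P} := @mem_lineJoin_of_collinear_right P le ic C S T h hS hT hcons x v r
  rcases hu with (hu | hu) | ⟨s, hs, t, ht, hst⟩
  · exact left hu hv hC
  · exact right hu hv hC
  · rcases h.weak_triangle_of_consistent (fun _ _ => h.lineJoin_consistent hcons)
      (.inl (.inl hs)) hv hu' (.inl (.inr ht)) hst (h.c_symm_left _ _ _ hC) with
      ⟨y, hy, hyr⟩ | ⟨s', hs', hr⟩ | hr | ⟨s', t', hs', ht', hr⟩ | hr | hr
    · exact right ht (left hs hv hy) hyr
    · exact left (hS.1 _ _ hs' hs) hv hr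
    · exact right ht hv hr
    · exact .inr ⟨s', hS.1 _ _ hs' hs, t', hT.1 _ _ ht' ht, hr⟩
    · exact .inl (.inl (hS.1 _ _ hr hs))
    · exact .inl (.inr (hT.1 _ _ hr ht))

theorem isCSub_lineJoin (h : IsPPIP P le ic C) (hS : IsCSub le ic C S) (hT : IsCSub le ic C T)
    (hcons : ∀ p q, p ∈ S ∪ T → q ∈ S ∪ T → ¬ ic p q) : IsCSub le ic C (lineJoin C S T) :=
  ⟨fun _ _ => h.lineJoin_lower hS hT, fun _ _ => h.lineJoin_consistent hcons,
    fun _ _ _ => h.mem_lineJoin_of_collinear hS hT hcons⟩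

end IsPPIP

/-- If `S, T` are consistent subspaces of a PPIP and `S ∪ T` is consistent, then the
join `S ∨ T` exists in `Csub(P)` and equals
`S ∪ T ∪ {r : ∃ p ∈ S, q ∈ T with C(p,q,r)}`. -/
theorem stmt5 (P : Type*) [Fintype P] (le ic : P → P → Prop) (C : P → P → P → Prop)
    (h : IsPPIP P le ic C) (S T : Set P)
    (hS : IsCSub le ic C S) (hT : IsCSub le ic C T)
    (hcons : ∀ p q, p ∈ S ∪ T → q ∈ S ∪ T → ¬ ic p q) :
    ∃ hU : IsCSub le ic C (S ∪ T ∪ {r | ∃ p ∈ S, ∃ q ∈ T, C p q r}),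
      IsLUB {(⟨S, hS⟩ : {X : Set P // IsCSub le ic C X}), ⟨T, hT⟩}
        (⟨S ∪ T ∪ {r | ∃ p ∈ S, ∃ q ∈ T, C p q r}, hU⟩ :
          {X : Set P // IsCSub le ic C X}) := by
  refine ⟨h.isCSub_lineJoin hS hT hcons, ?_, ?_⟩
  · rintro X (rfl | rfl)
    · exact fun _ hr => Or.inl (Or.inl hr)
    · exact fun _ hr => Or.inl (Or.inr hr)
  · intro X hX
    have hSX : S ⊆ X.1 := hX (Or.inl rfl)
    have hTX : T ⊆ X.1 := hX (Or.inr rfl)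
    rintro r ((hr | hr) | ⟨p, hp, q, hq, hC⟩)
    · exact hSX hr
    · exact hTX hr
    · exact X.2.2.2 p q r (hSX hp) (hTX hq) hC
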